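/- arXiv:2505.05451 — 5 statements merged into one kernel-verified Lean document; each statement's English description precedes it below -/
import Mathlib

section
/- Let ν ≥ 0. Define the modified Bessel function of the first kind by I_ν(u) = ∑_{k=0}^∞ (u/2)^{2k+ν} / (Γ(k+1)·Γ(k+ν+1)) for u ≥ 0, and for α ≥ 1/2, t > 0, x > 0 define the Bessel transition density p_α(t;x,y) = (1/t) · (y^{α+1/2}/x^{α−1/2}) · exp(−(x²+y²)/(2t)) · I_{α−1/2}(xy/t) for y > 0. Then for every real α ≥ 1/2, every t > 0 and every x > 0, the function y ↦ p_α(t;x,y) is a probability density on (0,∞), i.e. ∫_0^∞ p_α(t;x,y) dy = 1. -/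
/-!
With `ν = α - 1/2`, the Bessel series turns `p_α(t;x,y)` into a series of nonnegative multiples of
the functions `y ^ (2k + 2ν + 1) * exp (-y² / (2t))`. Each of these is a Gamma integral, whose value
cancels the factor `Γ(k + ν + 1)` in the Bessel coefficient, so that the `k`-th term integrates to the
Poisson weight `exp (-x²/(2t)) * (x²/(2t))^k / k!` (`integral_besselTerm`). These weights sum to `1`,
and since the terms are nonnegative, the sum and the integral may be interchanged.
-/

open Real MeasureTheory

/-- The modified Bessel function of the first kind with parameter `ν`:
`I_ν(u) = ∑_{k=0}^∞ (u/2)^{2k+ν} / (Γ(k+1)·Γ(k+ν+1))`. -/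
noncomputable def besselI (ν u : ℝ) : ℝ :=
  ∑' k : ℕ, (u / 2) ^ (2 * (k : ℝ) + ν) / (Real.Gamma ((k : ℝ) + 1) * Real.Gamma ((k : ℝ) + ν + 1))

/-- The transition density of the Bessel process of dimension `2α+1` started from `x > 0`:
`p_α(t;x,y) = (1/t) · (y^{α+1/2}/x^{α−1/2}) · exp(−(x²+y²)/(2t)) · I_{α−1/2}(xy/t)`. -/
noncomputable def besselDensity (α t x y : ℝ) : ℝ :=
  (1 / t) * (y ^ (α + 1 / 2) / x ^ (α - 1 / 2)) * Real.exp (-(x ^ 2 + y ^ 2) / (2 * t)) *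
    besselI (α - 1 / 2) (x * y / t)

/-- The coefficient of `y ^ (2k + 2ν + 1) * exp (-y² / (2t))` in the series expansion of the Bessel
transition density with `ν = α - 1/2`. -/
noncomputable def besselCoeff (ν t x : ℝ) (k : ℕ) : ℝ :=
  (1 / t) * Real.exp (-(x ^ 2 / (2 * t))) * ((x / (2 * t)) ^ (2 * (k : ℝ) + ν) / x ^ ν) /
    (Real.Gamma ((k : ℝ) + 1) * Real.Gamma ((k : ℝ) + ν + 1))

/-- The `k`-th term of the series expansion of the Bessel transition density. -/
noncomputable def besselTerm (ν t x : ℝ) (k : ℕ) (y : ℝ) : ℝ :=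
  besselCoeff ν t x k * (y ^ (2 * (k : ℝ) + 2 * ν + 1) * Real.exp (-(1 / (2 * t)) * y ^ (2 : ℝ)))

lemma besselCoeff_nonneg {ν t x : ℝ} (hν : 0 ≤ ν) (ht : 0 < t) (hx : 0 < x) (k : ℕ) :
    0 ≤ besselCoeff ν t x k := by
  have h1 : 0 < Real.Gamma ((k : ℝ) + 1) := Real.Gamma_pos_of_pos (by positivity)
  have h2 : 0 < Real.Gamma ((k : ℝ) + ν + 1) := Real.Gamma_pos_of_pos (by positivity)
  unfold besselCoeff
  positivity

lemma besselDensity_eq_tsum {α t x y : ℝ} (ht : 0 < t) (hx : 0 < x) (hy : 0 < y) :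
    besselDensity α t x y = ∑' k : ℕ, besselTerm (α - 1 / 2) t x k y := by
  unfold besselDensity besselI
  rw [← tsum_mul_left]
  refine tsum_congr fun k => ?_
  unfold besselTerm besselCoeff
  have hexp : Real.exp (-(x ^ 2 + y ^ 2) / (2 * t)) =
      Real.exp (-(x ^ 2 / (2 * t))) * Real.exp (-(1 / (2 * t)) * y ^ (2 : ℝ)) := by
    rw [← Real.exp_add, Real.rpow_two]
    congr 1
    field_simp
    ring
  have hxy : x * y / t / 2 = x / (2 * t) * y := by field_simp
  have hpow : y ^ (2 * (k : ℝ) + 2 * (α - 1 / 2) + 1) =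
      y ^ (α + 1 / 2) * y ^ (2 * (k : ℝ) + (α - 1 / 2)) := by
    rw [← Real.rpow_add hy]
    congr 1
    ring
  rw [hexp, hxy, hpow, Real.mul_rpow (by positivity) hy.le]
  ring

lemma integrable_besselTerm {ν t : ℝ} (x : ℝ) (hν : 0 ≤ ν) (ht : 0 < t) (k : ℕ) :
    Integrable (besselTerm ν t x k) (volume.restrict (Set.Ioi 0)) := by
  have hk : (0 : ℝ) ≤ k := k.cast_nonneg
  exact (integrableOn_rpow_mul_exp_neg_mul_rpow (by linarith) two_pos (by positivity)).const_mul _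

/-- The `k`-th term has as its mass the Poisson weight with parameter `x² / (2t)`. -/
lemma integral_besselTerm {ν t x : ℝ} (hν : 0 ≤ ν) (ht : 0 < t) (hx : 0 < x) (k : ℕ) :
    ∫ y in Set.Ioi (0 : ℝ), besselTerm ν t x k y =
      Real.exp (-(x ^ 2 / (2 * t))) * ((x ^ 2 / (2 * t)) ^ k / (k.factorial : ℝ)) := by
  have hk : (0 : ℝ) ≤ k := k.cast_nonneg
  have hG : Real.Gamma ((k : ℝ) + ν + 1) ≠ 0 :=
    (Real.Gamma_pos_of_pos (by positivity)).ne'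
  have hs : 0 < 2 * t := by positivity
  unfold besselTerm
  rw [integral_const_mul, integral_rpow_mul_exp_neg_mul_rpow two_pos (by linarith) (by positivity)]
  unfold besselCoeff
  have e1 : -(2 * (k : ℝ) + 2 * ν + 1 + 1) / 2 = -((k : ℝ) + ν + 1) := by ring
  have e2 : (2 * (k : ℝ) + 2 * ν + 1 + 1) / 2 = (k : ℝ) + ν + 1 := by ring
  have hinv : (1 / (2 * t)) ^ (-((k : ℝ) + ν + 1)) = (2 * t) ^ k * (2 * t) ^ ν * (2 * t) := by
    rw [one_div, Real.inv_rpow hs.le, Real.rpow_neg hs.le, inv_inv, Real.rpow_add hs,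
      Real.rpow_add hs, Real.rpow_one, Real.rpow_natCast]
  have hnum : (x / (2 * t)) ^ (2 * (k : ℝ) + ν) =
      (x ^ 2) ^ k / ((2 * t) ^ k * (2 * t) ^ k) * (x ^ ν / (2 * t) ^ ν) := by
    rw [Real.rpow_add (by positivity), Real.div_rpow hx.le hs.le ν, ← pow_add, ← two_mul,
      ← pow_mul, ← div_pow]
    congr 1
    exact_mod_cast Real.rpow_natCast (x / (2 * t)) (2 * k)
  rw [e1, e2, hinv, hnum, Real.Gamma_nat_eq_factorial, div_pow]
  have h1 : x ^ ν ≠ 0 := (Real.rpow_pos_of_pos hx ν).ne'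
  have h2 : (2 * t) ^ ν ≠ 0 := (Real.rpow_pos_of_pos hs ν).ne'
  have h3 : (k.factorial : ℝ) ≠ 0 := by positivity
  have h4 : (2 * t) ^ k ≠ 0 := by positivity
  generalize (2 * t) ^ ν = a at *
  generalize (2 * t) ^ k = b at *
  generalize x ^ ν = c at *
  field_simp

/-- For every `α ≥ 1/2`, `t > 0`, `x > 0`, the Bessel transition density `y ↦ p_α(t;x,y)`
is a probability density on `(0,∞)`. -/
theorem besselDensity_integral_eq_one (α t x : ℝ) (hα : 1 / 2 ≤ α) (ht : 0 < t) (hx : 0 < x) :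
    ∫ y in Set.Ioi (0 : ℝ), besselDensity α t x y = 1 := by
  have hν : 0 ≤ α - 1 / 2 := by linarith
  have hpoisson : HasSum (fun k : ℕ => Real.exp (-(x ^ 2 / (2 * t))) *
      ((x ^ 2 / (2 * t)) ^ k / (k.factorial : ℝ))) 1 := by
    have h := (NormedSpace.expSeries_div_hasSum_exp (x ^ 2 / (2 * t))).mul_left
      (Real.exp (-(x ^ 2 / (2 * t))))
    rwa [← Real.exp_eq_exp_ℝ, ← Real.exp_add, neg_add_cancel, Real.exp_zero] at h
  have hnorm : ∀ k : ℕ, ∫ y in Set.Ioi (0 : ℝ), ‖besselTerm (α - 1 / 2) t x k y‖ =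
      ∫ y in Set.Ioi (0 : ℝ), besselTerm (α - 1 / 2) t x k y := fun k =>
    setIntegral_congr_fun measurableSet_Ioi fun y hy => by
      have hy' : 0 < y := hy
      have := besselCoeff_nonneg hν ht hx k
      exact Real.norm_of_nonneg (by unfold besselTerm; positivity)
  have hsum := hasSum_integral_of_summable_integral_norm
    (fun k => integrable_besselTerm x hν ht k)
    (by simpa only [hnorm, integral_besselTerm hν ht hx] using hpoisson.summable)
  simp only [integral_besselTerm hν ht hx] at hsum
  rw [setIntegral_congr_fun measurableSet_Ioi fun y hy => besselDensity_eq_tsum ht hx hy]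
  exact hsum.unique hpoisson
end

section
/- Let α ≥ 1/2, x > 0, s > 0, and let β be a real number with β > −(2α+1). Then ∫_0^∞ y^β · p_α(s;x,y) dy = (2s)^{β/2} · exp(−x²/(2s)) · ∑_{k=0}^∞ [Γ(k+α+1/2+β/2) / (Γ(k+1)·Γ(k+α+1/2))] · (x²/(2s))^k, where p_α is the Bessel transition density. -/
/-!
The identity is obtained by integrating the Bessel series term by term. For `y > 0` the `k`-th term
of `y ^ β * besselDensity α s x y` is a constant times
`y ^ (β + 2 * α + 2 * k) * exp (-y ^ 2 / (2 * s))` (`besselMoment_integrand_term`), whose integral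
is a Gamma value times a power of `2 * s` (`besselMoment_coeff_mul_integral`). All terms are
nonnegative, so the interchange of sum and integral only requires the series of integrals to
converge. Up to a constant factor that series is the one on the right-hand side, and it converges
by the ratio test because `Γ (t + 1) = t * Γ t` makes consecutive ratios `O(1 / k)`
(`summable_gamma_ratio`).
-/

open Real MeasureTheory

open Filter Topology in
/-- Convergence of a confluent hypergeometric series, by the ratio test. -/
lemma summable_gamma_ratio {a c z : ℝ} (ha : 0 < a) (hc : 0 < c) (hz : 0 < z) :
    Summable fun k : ℕ => Real.Gamma ((k : ℝ) + a)
      / (Real.Gamma ((k : ℝ) + 1) * Real.Gamma ((k : ℝ) + c)) * z ^ k := by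
  have pos : ∀ k : ℕ, 0 < Real.Gamma ((k : ℝ) + a)
      / (Real.Gamma ((k : ℝ) + 1) * Real.Gamma ((k : ℝ) + c)) * z ^ k := by
    intro k
    have h1 := Real.Gamma_pos_of_pos (show (0 : ℝ) < k + a by positivity)
    have h2 := Real.Gamma_pos_of_pos (show (0 : ℝ) < k + 1 by positivity)
    have h3 := Real.Gamma_pos_of_pos (show (0 : ℝ) < k + c by positivity)
    positivity
  refine summable_of_ratio_test_tendsto_lt_one (l := 0) zero_lt_one
    (Eventually.of_forall fun k => (pos k).ne') ?_
  have hlim : Tendsto (fun k : ℕ => z * (1 + a) * (1 / ((k : ℝ) + c))) atTop (𝓝 0) := by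
    have : Tendsto (fun k : ℕ => (k : ℝ) + c) atTop atTop :=
      tendsto_atTop_add_const_right _ _ tendsto_natCast_atTop_atTop
    simpa [one_div] using this.inv_tendsto_atTop.const_mul (z * (1 + a))
  refine squeeze_zero (fun k => by positivity) (fun k => ?_) hlim
  rw [Real.norm_of_nonneg (pos _).le, Real.norm_of_nonneg (pos _).le]
  have ka : (0 : ℝ) < k + a := by positivity
  have kc : (0 : ℝ) < k + c := by positivity
  have k1 : (0 : ℝ) < k + 1 := by positivity
  have h1 := Real.Gamma_pos_of_pos ka
  have h2 := Real.Gamma_pos_of_pos k1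
  have h3 := Real.Gamma_pos_of_pos kc
  have e1 : Real.Gamma (((k + 1 : ℕ) : ℝ) + a) = (k + a) * Real.Gamma (k + a) := by
    rw [← Real.Gamma_add_one ka.ne']; push_cast; ring_nf
  have e2 : Real.Gamma (((k + 1 : ℕ) : ℝ) + 1) = (k + 1) * Real.Gamma (k + 1) := by
    rw [← Real.Gamma_add_one k1.ne']; push_cast; ring_nf
  have e3 : Real.Gamma (((k + 1 : ℕ) : ℝ) + c) = (k + c) * Real.Gamma (k + c) := by
    rw [← Real.Gamma_add_one kc.ne']; push_cast; ring_nf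
  rw [e1, e2, e3]
  have e : (k + a) * Real.Gamma (k + a) /
      ((k + 1) * Real.Gamma (k + 1) * ((k + c) * Real.Gamma (k + c))) * z ^ (k + 1) /
      (Real.Gamma (k + a) / (Real.Gamma (k + 1) * Real.Gamma (k + c)) * z ^ k)
      = z * ((k + a) / (k + 1)) * (1 / (k + c)) := by
    field_simp
    exact pow_succ z k
  rw [e]
  have : ((k : ℝ) + a) / (k + 1) ≤ 1 + a := by
    rw [div_le_iff₀ k1]
    nlinarith [(Nat.cast_nonneg k : (0 : ℝ) ≤ k)]
  gcongr

/-- The coefficient of `y ^ (β + 2 * α + 2 * k) * exp (-y ^ 2 / (2 * s))` in the expansion of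
`y ^ β * besselDensity α s x y`; it does not depend on `β`. -/
noncomputable def besselMomentCoeff (α x s : ℝ) (k : ℕ) : ℝ :=
  (1 / s) * Real.exp (-x ^ 2 / (2 * s)) * (x ^ 2) ^ k / (2 * s) ^ (2 * (k : ℝ) + (α - 1 / 2))
    / (Real.Gamma ((k : ℝ) + 1) * Real.Gamma ((k : ℝ) + α + 1 / 2))

lemma besselMoment_integrand_term {α x s β y : ℝ} (hx : 0 < x) (hs : 0 < s) (hy : 0 < y) (k : ℕ) :
    y ^ β * ((1 / s) * (y ^ (α + 1 / 2) / x ^ (α - 1 / 2)) *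
      Real.exp (-(x ^ 2 + y ^ 2) / (2 * s)) *
      ((x * y / s / 2) ^ (2 * (k : ℝ) + (α - 1 / 2)) /
        (Real.Gamma ((k : ℝ) + 1) * Real.Gamma ((k : ℝ) + (α - 1 / 2) + 1))))
      = besselMomentCoeff α x s k *
        (y ^ (β + 2 * α + 2 * (k : ℝ)) * Real.exp (-(1 / (2 * s)) * y ^ (2 : ℝ))) := by
  have eG : (k : ℝ) + (α - 1 / 2) + 1 = k + α + 1 / 2 := by ring
  have eE : Real.exp (-(x ^ 2 + y ^ 2) / (2 * s))
      = Real.exp (-x ^ 2 / (2 * s)) * Real.exp (-(1 / (2 * s)) * y ^ (2 : ℝ)) := by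
    rw [← Real.exp_add, Real.rpow_two]; congr 1; field_simp; ring
  have eB : (x * y / s / 2) ^ (2 * (k : ℝ) + (α - 1 / 2))
      = (x ^ 2) ^ k * x ^ (α - 1 / 2) * y ^ (2 * (k : ℝ) + (α - 1 / 2))
        / (2 * s) ^ (2 * (k : ℝ) + (α - 1 / 2)) := by
    rw [show x * y / s / 2 = x * y / (2 * s) by field_simp,
      Real.div_rpow (by positivity) (by positivity), Real.mul_rpow hx.le hy.le,
      Real.rpow_add hx (2 * (k : ℝ)), Real.rpow_mul hx.le, Real.rpow_natCast, Real.rpow_two]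
  have eY : y ^ (β + 2 * α + 2 * (k : ℝ))
      = y ^ β * y ^ (α + 1 / 2) * y ^ (2 * (k : ℝ) + (α - 1 / 2)) := by
    rw [← Real.rpow_add hy, ← Real.rpow_add hy]; congr 1; ring
  have hxne : x ^ (α - 1 / 2) ≠ 0 := (Real.rpow_pos_of_pos hx _).ne'
  rw [eG, eE, eB, eY, besselMomentCoeff]
  generalize x ^ (α - 1 / 2) = X at *
  field_simp

lemma besselMoment_coeff_mul_integral {α x s β : ℝ} (hα : 1 / 2 ≤ α) (hs : 0 < s)
    (hβ : -(2 * α + 1) < β) (k : ℕ) :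
    besselMomentCoeff α x s k * ∫ y in Set.Ioi (0 : ℝ),
        y ^ (β + 2 * α + 2 * (k : ℝ)) * Real.exp (-(1 / (2 * s)) * y ^ (2 : ℝ))
      = (2 * s) ^ (β / 2) * Real.exp (-x ^ 2 / (2 * s)) *
        (Real.Gamma ((k : ℝ) + α + 1 / 2 + β / 2)
            / (Real.Gamma ((k : ℝ) + 1) * Real.Gamma ((k : ℝ) + α + 1 / 2))
          * (x ^ 2 / (2 * s)) ^ k) := by
  have hk : (0 : ℝ) ≤ k := Nat.cast_nonneg k
  have hd : 0 < 2 * s := by positivity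
  rw [integral_rpow_mul_exp_neg_mul_rpow two_pos (by linarith) (by positivity)]
  have eG : (β + 2 * α + 2 * (k : ℝ) + 1) / 2 = k + α + 1 / 2 + β / 2 := by ring
  have eP : (1 / (2 * s)) ^ (-(β + 2 * α + 2 * (k : ℝ) + 1) / 2)
      = (2 * s) ^ (β / 2) * (2 * s) ^ (2 * (k : ℝ) + (α - 1 / 2)) * (2 * s) / (2 * s) ^ k := by
    rw [one_div, Real.inv_rpow hd.le, ← Real.rpow_neg hd.le, eq_div_iff (by positivity),
      ← Real.rpow_natCast, ← Real.rpow_add hd, ← Real.rpow_add hd]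
    nth_rewrite 3 [← Real.rpow_one (2 * s)]
    rw [← Real.rpow_add hd]
    congr 1; ring
  have h2 := Real.Gamma_pos_of_pos (show (0 : ℝ) < k + 1 by positivity)
  have h3 := Real.Gamma_pos_of_pos (show (0 : ℝ) < k + α + 1 / 2 by linarith)
  have h4 : (2 * s) ^ (2 * (k : ℝ) + (α - 1 / 2)) ≠ 0 := (Real.rpow_pos_of_pos hd _).ne'
  rw [eG, eP, besselMomentCoeff, div_pow (x ^ 2)]
  generalize (2 * s) ^ (2 * (k : ℝ) + (α - 1 / 2)) = D at *
  generalize (2 * s) ^ (β / 2) = B at *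
  field_simp

/-- The `β`-th moment of the time-`s` position of a Bessel process of dimension `2α+1`
started from `x > 0`:
`∫_0^∞ y^β p_α(s;x,y) dy = (2s)^{β/2} e^{−x²/(2s)} ∑_k Γ(k+α+1/2+β/2)/(Γ(k+1)Γ(k+α+1/2)) (x²/(2s))^k`. -/
theorem besselDensity_moment (α x s β : ℝ) (hα : 1 / 2 ≤ α) (hx : 0 < x) (hs : 0 < s)
    (hβ : -(2 * α + 1) < β) :
    ∫ y in Set.Ioi (0 : ℝ), y ^ β * besselDensity α s x y
      = (2 * s) ^ (β / 2) * Real.exp (-x ^ 2 / (2 * s)) *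
        ∑' k : ℕ, Real.Gamma ((k : ℝ) + α + 1 / 2 + β / 2)
            / (Real.Gamma ((k : ℝ) + 1) * Real.Gamma ((k : ℝ) + α + 1 / 2))
          * (x ^ 2 / (2 * s)) ^ k := by
  set F : ℕ → ℝ → ℝ := fun k y => besselMomentCoeff α x s k *
    (y ^ (β + 2 * α + 2 * (k : ℝ)) * Real.exp (-(1 / (2 * s)) * y ^ (2 : ℝ))) with hF
  have hcoeff : ∀ k, 0 ≤ besselMomentCoeff α x s k := by
    intro k
    have hk : (0 : ℝ) ≤ k := Nat.cast_nonneg k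
    have h2 := Real.Gamma_pos_of_pos (show (0 : ℝ) < k + 1 by positivity)
    have h3 := Real.Gamma_pos_of_pos (show (0 : ℝ) < k + α + 1 / 2 by linarith)
    unfold besselMomentCoeff
    positivity
  have hpt : ∀ y ∈ Set.Ioi (0 : ℝ), y ^ β * besselDensity α s x y = ∑' k, F k y := by
    intro y hy
    rw [besselDensity, besselI, ← tsum_mul_left, ← tsum_mul_left]
    exact tsum_congr fun k => besselMoment_integrand_term hx hs hy k
  have hFval : ∀ k, ∫ y in Set.Ioi (0 : ℝ), F k y = _ := fun k =>
    (integral_const_mul _ _).trans (besselMoment_coeff_mul_integral (x := x) hα hs hβ k)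
  have hFint : ∀ k, Integrable (F k) (volume.restrict (Set.Ioi 0)) := fun k =>
    (integrableOn_rpow_mul_exp_neg_mul_rpow
      (by linarith [(Nat.cast_nonneg k : (0 : ℝ) ≤ k)]) two_pos (by positivity)).const_mul _
  have hnorm : ∀ k, ∫ y in Set.Ioi (0 : ℝ), ‖F k y‖ = ∫ y in Set.Ioi (0 : ℝ), F k y := by
    intro k
    refine setIntegral_congr_fun measurableSet_Ioi fun y hy => ?_
    have hy' : (0 : ℝ) < y := hy
    exact Real.norm_of_nonneg
      (mul_nonneg (hcoeff k) (mul_nonneg (Real.rpow_nonneg hy'.le _) (Real.exp_pos _).le))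
  have hsum : Summable fun k => ∫ y in Set.Ioi (0 : ℝ), ‖F k y‖ := by
    simp_rw [hnorm, hFval]
    refine Summable.mul_left _ ?_
    have h := summable_gamma_ratio (a := α + 1 / 2 + β / 2) (c := α + 1 / 2) (z := x ^ 2 / (2 * s))
      (by linarith) (by linarith) (by positivity)
    simpa only [← add_assoc] using h
  rw [setIntegral_congr_fun measurableSet_Ioi hpt,
    ← (hasSum_integral_of_summable_integral_norm hFint hsum).tsum_eq, ← tsum_mul_left]
  exact tsum_congr hFval
end

section
/- Let α ≥ 1, x > 0 and s > 0. Then ∫_0^∞ y^{−(α−1)} · p_α(s;x,y) dy ≤ s^{−(α−1)/2}, where p_α is the Bessel transition density. (In probabilistic terms: for a Bessel process of dimension 2α+1 started at x, the expectation of X_s^{−(α−1)} is at most s^{−(α−1)/2}.) -/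
/-!
Write `z = x² / (2s)` and `β = (α - 1) / 2`. Expanding the Bessel function in its power series and
integrating term by term (Gaussian moments) gives
`∫ y^{-(α-1)} p_α(s;x,y) dy = ∑ₖ e^{-z} zᵏ/k! · (2s)^{-β} · Γ(k + α/2 + 1) / Γ(k + α + 1/2)`:
the square of the Bessel process at time `s` is `2s` times a Gamma variable whose shape
`α + 1/2 + K` is randomised by a Poisson(`z`) variable `K`. Since the Poisson weights sum to one,
it suffices that each Gamma quotient is at most `2^β`, which is `Gamma_le_two_rpow_mul_Gamma`
with `a = k + 3/2`. That inequality is log-convexity of `Γ`: the slope of `log Γ` over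
`[a + β, a + 2β]` is at least its slope over `[a + β - 1, a + β]`, which equals
`log (a + β - 1) ≥ -log 2`.
-/

open Real MeasureTheory

lemma Gamma_le_two_rpow_mul_Gamma {a β : ℝ} (ha : 3 / 2 ≤ a) (hβ : 0 ≤ β) :
    Real.Gamma (a + β) ≤ 2 ^ β * Real.Gamma (a + 2 * β) := by
  rcases hβ.eq_or_lt with rfl | hβ
  · simp
  have hG : ∀ {t : ℝ}, 0 < t → 0 < Real.Gamma t := fun h => Real.Gamma_pos_of_pos h
  have h := Real.convexOn_log_Gamma.slope_mono_adjacent (x := a + β - 1) (y := a + β)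
    (z := a + 2 * β) (by simp only [Set.mem_Ioi]; linarith) (by simp only [Set.mem_Ioi]; linarith)
    (by linarith) (by linarith)
  simp only [Function.comp] at h
  have hrec : Real.Gamma (a + β) = (a + β - 1) * Real.Gamma (a + β - 1) := by
    have := Real.Gamma_add_one (s := a + β - 1) (by linarith)
    rwa [sub_add_cancel] at this
  have h1 : Real.log (Real.Gamma (a + β)) - Real.log (Real.Gamma (a + β - 1))
      = Real.log (a + β - 1) := by
    rw [hrec, Real.log_mul (by linarith) (hG (by linarith)).ne']
    ring
  have h2 : -Real.log 2 ≤ Real.log (a + β - 1) := by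
    rw [← Real.log_inv]
    exact Real.log_le_log (by norm_num) (by linarith)
  rw [h1, show a + β - (a + β - 1) = 1 by ring, div_one,
    show a + 2 * β - (a + β) = β by ring, le_div_iff₀ hβ] at h
  have hp : (0 : ℝ) < 2 ^ β := by positivity
  rw [← Real.log_le_log_iff (hG (by linarith)) (mul_pos hp (hG (by linarith))),
    Real.log_mul hp.ne' (hG (by linarith)).ne', Real.log_rpow (by norm_num)]
  nlinarith

/-- The `k`-th term of the power series of `y ^ (-(α - 1)) * besselDensity α s x y`. -/
noncomputable def momentTerm (α x s : ℝ) (k : ℕ) (y : ℝ) : ℝ :=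
  y ^ (-(α - 1)) * ((1 / s) * (y ^ (α + 1 / 2) / x ^ (α - 1 / 2)) *
    Real.exp (-(x ^ 2 + y ^ 2) / (2 * s)) *
    ((x * y / s / 2) ^ (2 * (k : ℝ) + (α - 1 / 2)) /
      (Real.Gamma ((k : ℝ) + 1) * Real.Gamma ((k : ℝ) + (α - 1 / 2) + 1))))

/-- The integral of `momentTerm α x s k` over `(0, ∞)`: a Poisson weight times a moment of a
Gamma variable. -/
noncomputable def momentCoeff (α x s : ℝ) (k : ℕ) : ℝ :=
  Real.exp (-(x ^ 2 / (2 * s))) * ((x ^ 2 / (2 * s)) ^ k / (k.factorial : ℝ)) *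
    ((2 * s) ^ (-(α - 1) / 2) *
      (Real.Gamma ((k : ℝ) + α / 2 + 1) / Real.Gamma ((k : ℝ) + (α - 1 / 2) + 1)))

lemma momentTerm_eq {α x s : ℝ} (hx : 0 < x) (hs : 0 < s) (k : ℕ)
    {y : ℝ} (hy : 0 < y) :
    momentTerm α x s k y =
      ((1 / s) * (1 / x ^ (α - 1 / 2)) * Real.exp (-(x ^ 2 / (2 * s))) *
        ((x / (2 * s)) ^ (2 * (k : ℝ) + (α - 1 / 2)) /
          (Real.Gamma ((k : ℝ) + 1) * Real.Gamma ((k : ℝ) + (α - 1 / 2) + 1)))) *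
        (y ^ (2 * (k : ℝ) + α + 1) * Real.exp (-(1 / (2 * s)) * y ^ (2 : ℝ))) := by
  have e1 : Real.exp (-(x ^ 2 + y ^ 2) / (2 * s)) =
      Real.exp (-(x ^ 2 / (2 * s))) * Real.exp (-(1 / (2 * s)) * y ^ (2 : ℝ)) := by
    rw [← Real.exp_add, Real.rpow_two]
    congr 1
    ring
  have e2 : (x * y / s / 2) ^ (2 * (k : ℝ) + (α - 1 / 2)) =
      (x / (2 * s)) ^ (2 * (k : ℝ) + (α - 1 / 2)) * y ^ (2 * (k : ℝ) + (α - 1 / 2)) := by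
    rw [← Real.mul_rpow (by positivity) hy.le]
    congr 1
    field_simp
  have e3 : y ^ (2 * (k : ℝ) + α + 1) =
      y ^ (-(α - 1)) * y ^ (α + 1 / 2) * y ^ (2 * (k : ℝ) + (α - 1 / 2)) := by
    rw [← Real.rpow_add hy, ← Real.rpow_add hy]
    congr 1
    ring
  rw [momentTerm, e1, e2, e3]
  ring

lemma integrableOn_momentTerm {α x s : ℝ} (hα : 1 ≤ α) (hx : 0 < x) (hs : 0 < s) (k : ℕ) :
    IntegrableOn (momentTerm α x s k) (Set.Ioi 0) := by
  refine IntegrableOn.congr_fun ?_ (fun y hy => (momentTerm_eq hx hs k hy).symm)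
    measurableSet_Ioi
  refine Integrable.const_mul ?_ _
  have hk : (0 : ℝ) ≤ k := k.cast_nonneg
  exact integrableOn_rpow_mul_exp_neg_mul_rpow (by linarith) (by norm_num) (by positivity)

lemma integral_momentTerm {α x s : ℝ} (hα : 1 ≤ α) (hx : 0 < x) (hs : 0 < s) (k : ℕ) :
    ∫ y in Set.Ioi (0 : ℝ), momentTerm α x s k y = momentCoeff α x s k := by
  have hk : (0 : ℝ) ≤ k := k.cast_nonneg
  have h2s : 0 < 2 * s := by positivity
  rw [setIntegral_congr_fun measurableSet_Ioi (fun y hy => momentTerm_eq hx hs k hy),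
    integral_const_mul, integral_rpow_mul_exp_neg_mul_rpow (by norm_num) (by linarith)
      (by positivity), momentCoeff, Real.Gamma_nat_eq_factorial]
  have e1 : (2 * (k : ℝ) + α + 1 + 1) / 2 = (k : ℝ) + α / 2 + 1 := by ring
  have e1' : -(2 * (k : ℝ) + α + 1 + 1) / 2 = -((k : ℝ) + α / 2 + 1) := by ring
  have e2 : (1 / (2 * s)) ^ (-((k : ℝ) + α / 2 + 1)) =
      (2 * s) ^ ((k : ℝ) + α / 2 + 1) := by
    rw [one_div, Real.inv_rpow h2s.le, Real.rpow_neg h2s.le, inv_inv]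
  have e3 : (x / (2 * s)) ^ (2 * (k : ℝ) + (α - 1 / 2)) =
      (x ^ 2) ^ k * x ^ (α - 1 / 2) / (2 * s) ^ (2 * (k : ℝ) + (α - 1 / 2)) := by
    rw [Real.div_rpow hx.le h2s.le, Real.rpow_add hx, ← pow_mul, ← Real.rpow_natCast x]
    push_cast
    rfl
  -- the powers of `2s` combine to `(2s)^{-k - β}`
  have e4 : (2 * s) ^ ((k : ℝ) + α / 2 + 1) =
      (2 * s) ^ (-(α - 1) / 2) * (2 * s) ^ (2 * (k : ℝ) + (α - 1 / 2)) * (2 * s) / (2 * s) ^ k := by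
    rw [← Real.rpow_natCast (2 * s) k, ← Real.rpow_add h2s]
    nth_rewrite 3 [← Real.rpow_one (2 * s)]
    rw [← Real.rpow_add h2s, ← Real.rpow_sub h2s]
    congr 1
    ring
  rw [e1, e1', e2, e3, e4, div_pow]
  have p1 : 0 < (2 * s) ^ (2 * (k : ℝ) + (α - 1 / 2)) := by positivity
  have p2 : 0 < x ^ (α - 1 / 2) := by positivity
  have p3 : 0 < Real.Gamma ((k : ℝ) + (α - 1 / 2) + 1) := Real.Gamma_pos_of_pos (by linarith)
  generalize (2 * s) ^ (2 * (k : ℝ) + (α - 1 / 2)) = A at *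
  generalize x ^ (α - 1 / 2) = B at *
  generalize Real.Gamma ((k : ℝ) + (α - 1 / 2) + 1) = C at *
  generalize (2 * s) ^ (-(α - 1) / 2) = D at *
  field_simp

lemma momentTerm_nonneg {α x s : ℝ} (hα : 1 ≤ α) (hx : 0 < x) (hs : 0 < s) (k : ℕ)
    {y : ℝ} (hy : 0 < y) : 0 ≤ momentTerm α x s k y := by
  have hk : (0 : ℝ) ≤ k := k.cast_nonneg
  have h1 : 0 < Real.Gamma ((k : ℝ) + 1) := Real.Gamma_pos_of_pos (by linarith)
  have h2 : 0 < Real.Gamma ((k : ℝ) + (α - 1 / 2) + 1) := Real.Gamma_pos_of_pos (by linarith)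
  unfold momentTerm
  positivity

lemma momentCoeff_nonneg {α x s : ℝ} (hα : 1 ≤ α) (hx : 0 < x) (hs : 0 < s) (k : ℕ) :
    0 ≤ momentCoeff α x s k := by
  rw [← integral_momentTerm hα hx hs k]
  exact setIntegral_nonneg measurableSet_Ioi fun y hy => momentTerm_nonneg hα hx hs k hy

lemma momentCoeff_le {α x s : ℝ} (hα : 1 ≤ α) (hs : 0 < s) (k : ℕ) :
    momentCoeff α x s k ≤
      Real.exp (-(x ^ 2 / (2 * s))) * ((x ^ 2 / (2 * s)) ^ k / (k.factorial : ℝ)) *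
        s ^ (-(α - 1) / 2) := by
  have hk : (0 : ℝ) ≤ k := k.cast_nonneg
  have hG := Gamma_le_two_rpow_mul_Gamma (a := (k : ℝ) + 3 / 2) (β := (α - 1) / 2)
    (by linarith) (by linarith)
  rw [show (k : ℝ) + 3 / 2 + (α - 1) / 2 = (k : ℝ) + α / 2 + 1 by ring,
    show (k : ℝ) + 3 / 2 + 2 * ((α - 1) / 2) = (k : ℝ) + (α - 1 / 2) + 1 by ring,
    ← div_le_iff₀ (Real.Gamma_pos_of_pos (by linarith))] at hG
  unfold momentCoeff
  refine mul_le_mul_of_nonneg_left ?_ (by positivity)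
  calc (2 * s) ^ (-(α - 1) / 2) *
        (Real.Gamma ((k : ℝ) + α / 2 + 1) / Real.Gamma ((k : ℝ) + (α - 1 / 2) + 1))
      ≤ (2 * s) ^ (-(α - 1) / 2) * 2 ^ ((α - 1) / 2) := by gcongr
    _ = s ^ (-(α - 1) / 2) := by
      rw [Real.mul_rpow (by norm_num) hs.le, mul_right_comm, ← Real.rpow_add (by norm_num),
        show -(α - 1) / 2 + (α - 1) / 2 = 0 by ring, Real.rpow_zero, one_mul]

/-- For a Bessel process of dimension `2α+1` (`α ≥ 1`) started at `x > 0`, the expectation of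
`X_s^{−(α−1)}` is at most `s^{−(α−1)/2}`. -/
theorem besselDensity_neg_moment_le (α x s : ℝ) (hα : 1 ≤ α) (hx : 0 < x) (hs : 0 < s) :
    ∫ y in Set.Ioi (0 : ℝ), y ^ (-(α - 1)) * besselDensity α s x y ≤ s ^ (-(α - 1) / 2) := by
  have hexpand : ∀ y : ℝ, y ^ (-(α - 1)) * besselDensity α s x y =
      ∑' k : ℕ, momentTerm α x s k y := by
    intro y
    simp only [besselDensity, besselI, momentTerm, tsum_mul_left]
  have hbound : HasSum (fun k : ℕ => Real.exp (-(x ^ 2 / (2 * s))) *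
      ((x ^ 2 / (2 * s)) ^ k / (k.factorial : ℝ)) * s ^ (-(α - 1) / 2))
      (s ^ (-(α - 1) / 2)) := by
    have h := NormedSpace.expSeries_div_hasSum_exp (x ^ 2 / (2 * s))
    rw [← Real.exp_eq_exp_ℝ] at h
    have h' := (h.mul_left (Real.exp (-(x ^ 2 / (2 * s))))).mul_right (s ^ (-(α - 1) / 2))
    rwa [← Real.exp_add, neg_add_cancel, Real.exp_zero, one_mul] at h'
  have hsum : Summable (momentCoeff α x s) :=
    Summable.of_nonneg_of_le (momentCoeff_nonneg hα hx hs) (momentCoeff_le hα hs) hbound.summable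
  have hnorm : ∀ k, ∫ y in Set.Ioi (0 : ℝ), ‖momentTerm α x s k y‖ = momentCoeff α x s k := by
    intro k
    rw [← integral_momentTerm hα hx hs k]
    exact setIntegral_congr_fun measurableSet_Ioi
      fun y hy => Real.norm_of_nonneg (momentTerm_nonneg hα hx hs k hy)
  have hint := hasSum_integral_of_summable_integral_norm
    (fun k => integrableOn_momentTerm hα hx hs k) (by simpa only [hnorm] using hsum)
  simp only [integral_momentTerm hα hx hs] at hint
  simp only [hexpand]
  exact hasSum_le (momentCoeff_le hα hs) hint hbound
end

section
/- Let α ≥ 1/2, t > 0 and y > 0. Then the Bessel transition density p_α(t;x,y) converges as x → 0⁺ to the entrance density from the origin: lim_{x→0⁺} p_α(t;x,y) = y^{2α} · exp(−y²/(2t)) / (2^{α−1/2} · t^{α+1/2} · Γ(α+1/2)). -/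
/-!
For `u > 0` one has `I_ν(u) = (u/2)^ν J_ν(u)`, where
`J_ν(u) = ∑_k (u/2)^{2k} / (k! Γ(k+ν+1))` is an honest power series. For `ν ≥ 0` its coefficients
are at most `1 / (k! Γ(ν+1))`, so dominated convergence gives `J_ν(u) → 1/Γ(ν+1)` as `u → 0`.
With `ν = α - 1/2` and `u = xy/t`, the factor `x^ν` coming from `(u/2)^ν` cancels the singular
factor `x^{-(α-1/2)}` of the density, and the rest is continuous at `x = 0`.
-/

open Real MeasureTheory

/-- The even power series `∑_k (u/2)^{2k} / (k! Γ(k+ν+1))`, that is, `I_ν(u)` without its factor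
`(u/2)^ν`. -/
noncomputable def besselSeries (ν u : ℝ) : ℝ :=
  ∑' k : ℕ, (u / 2) ^ (2 * k) / (Real.Gamma ((k : ℝ) + 1) * Real.Gamma ((k : ℝ) + ν + 1))

lemma besselI_eq_rpow_mul_besselSeries (ν : ℝ) {u : ℝ} (hu : 0 < u) :
    besselI ν u = (u / 2) ^ ν * besselSeries ν u := by
  unfold besselI besselSeries
  rw [← tsum_mul_left]
  refine tsum_congr fun k => ?_
  rw [Real.rpow_add (by positivity), show (2 * (k : ℝ)) = ((2 * k : ℕ) : ℝ) by push_cast; ring,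
    Real.rpow_natCast]
  ring

/-- The Gamma function is not monotone on `[1, 2]`, but it does not decrease along unit steps from any
point `ν + 1 ≥ 1`. -/
lemma gamma_add_one_le_gamma_nat_add {ν : ℝ} (hν : 0 ≤ ν) (k : ℕ) :
    Real.Gamma (ν + 1) ≤ Real.Gamma ((k : ℝ) + ν + 1) := by
  induction k with
  | zero => simp
  | succ k ih =>
    have hpos : 0 < (k : ℝ) + ν + 1 := by positivity
    have hG := Real.Gamma_pos_of_pos hpos
    have hk : (0 : ℝ) ≤ k := k.cast_nonneg
    rw [show ((k + 1 : ℕ) : ℝ) + ν + 1 = ((k : ℝ) + ν + 1) + 1 by push_cast; ring,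
      Real.Gamma_add_one hpos.ne']
    nlinarith

lemma tendsto_besselSeries_zero {ν : ℝ} (hν : 0 ≤ ν) :
    Filter.Tendsto (besselSeries ν) (nhds 0) (nhds (1 / Real.Gamma (ν + 1))) := by
  have hΓ : 0 < Real.Gamma (ν + 1) := Real.Gamma_pos_of_pos (by positivity)
  have hval : ∑' k : ℕ, ((0 : ℝ) / 2) ^ (2 * k) /
      (Real.Gamma ((k : ℝ) + 1) * Real.Gamma ((k : ℝ) + ν + 1)) = 1 / Real.Gamma (ν + 1) := by
    rw [tsum_eq_single 0]
    · simp
    · intro k hk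
      simp [hk]
  rw [← hval]
  unfold besselSeries
  refine tendsto_tsum_of_dominated_convergence
    (bound := fun k : ℕ => 1 / (k.factorial : ℝ) * (1 / Real.Gamma (ν + 1))) ?_ ?_ ?_
  · have h := Real.summable_pow_div_factorial 1
    simp only [one_pow] at h
    exact h.mul_right _
  · intro k
    have hc : Continuous fun u : ℝ => (u / 2) ^ (2 * k) /
        (Real.Gamma ((k : ℝ) + 1) * Real.Gamma ((k : ℝ) + ν + 1)) := by fun_prop
    exact hc.tendsto 0
  · filter_upwards [Metric.ball_mem_nhds (0 : ℝ) two_pos] with u hu k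
    have hu2 : |u| / 2 ≤ 1 := by
      rw [mem_ball_zero_iff, Real.norm_eq_abs] at hu
      linarith
    have hle := gamma_add_one_le_gamma_nat_add hν k
    have hfac : (0 : ℝ) < k.factorial := by positivity
    have hGk : 0 < Real.Gamma ((k : ℝ) + ν + 1) := hΓ.trans_le hle
    rw [Real.Gamma_nat_eq_factorial, norm_div, norm_pow, norm_div, Real.norm_eq_abs u,
      Real.norm_two, Real.norm_of_nonneg (by positivity : 0 ≤ (k.factorial : ℝ) * _),
      one_div_mul_one_div]
    gcongr
    exact pow_le_one₀ (by positivity) hu2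

/-- As the starting point `x → 0⁺`, the Bessel transition density converges to the entrance
density from the origin:
`lim_{x→0⁺} p_α(t;x,y) = y^{2α} e^{−y²/(2t)} / (2^{α−1/2} t^{α+1/2} Γ(α+1/2))`. -/
theorem besselDensity_entrance_limit (α t y : ℝ) (hα : 1 / 2 ≤ α) (ht : 0 < t) (hy : 0 < y) :
    Filter.Tendsto (fun x => besselDensity α t x y) (nhdsWithin 0 (Set.Ioi 0))
      (nhds (y ^ (2 * α) * Real.exp (-y ^ 2 / (2 * t))
        / ((2 : ℝ) ^ (α - 1 / 2) * t ^ (α + 1 / 2) * Real.Gamma (α + 1 / 2)))) := by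
  have hJ : Filter.Tendsto (fun x : ℝ => besselSeries (α - 1 / 2) (x * y / t)) (nhds 0)
      (nhds (1 / Real.Gamma (α - 1 / 2 + 1))) := by
    refine (tendsto_besselSeries_zero (by linarith)).comp ?_
    have hc : Continuous fun x : ℝ => x * y / t := by fun_prop
    simpa using hc.tendsto 0
  have hE : Filter.Tendsto (fun x : ℝ => Real.exp (-(x ^ 2 + y ^ 2) / (2 * t))) (nhds 0)
      (nhds (Real.exp (-y ^ 2 / (2 * t)))) := by
    have hc : Continuous fun x : ℝ => Real.exp (-(x ^ 2 + y ^ 2) / (2 * t)) := by fun_prop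
    simpa using hc.tendsto 0
  have hlim := ((hE.mul hJ).const_mul
    ((1 / t) * y ^ (α + 1 / 2) * (y / (2 * t)) ^ (α - 1 / 2))).mono_left
      (nhdsWithin_le_nhds (s := Set.Ioi 0))
  have hval : y ^ (2 * α) * Real.exp (-y ^ 2 / (2 * t))
        / ((2 : ℝ) ^ (α - 1 / 2) * t ^ (α + 1 / 2) * Real.Gamma (α + 1 / 2)) =
      (1 / t) * y ^ (α + 1 / 2) * (y / (2 * t)) ^ (α - 1 / 2) *
        (Real.exp (-y ^ 2 / (2 * t)) * (1 / Real.Gamma (α - 1 / 2 + 1))) := by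
    have hΓ : 0 < Real.Gamma (α + 1 / 2) := Real.Gamma_pos_of_pos (by linarith)
    rw [show α - 1 / 2 + 1 = α + 1 / 2 by ring, Real.div_rpow hy.le (by positivity),
      Real.mul_rpow zero_le_two ht.le, show 2 * α = (α + 1 / 2) + (α - 1 / 2) by ring,
      Real.rpow_add hy, show t ^ (α + 1 / 2) = t ^ (α - 1 / 2) * t by
        rw [← Real.rpow_add_one ht.ne']; ring_nf]
    field_simp
  rw [hval]
  refine hlim.congr' ?_
  filter_upwards [self_mem_nhdsWithin] with x hx
  have hx : 0 < x := hx
  have hxp : 0 < x ^ (α - 1 / 2) := Real.rpow_pos_of_pos hx _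
  rw [besselDensity, besselI_eq_rpow_mul_besselSeries _ (by positivity : 0 < x * y / t),
    show x * y / t / 2 = x * (y / (2 * t)) by field_simp,
    Real.mul_rpow hx.le (by positivity)]
  field_simp
end

section
/- Let β ∈ (0,1), λ > 0, C > 0, C' > 0, and for each positive integer n let μ_n be a probability measure on [0,∞) such that: (i) for every t > 0, n^β·μ_n((t,∞)) → C·t^{−β} as n → ∞; and (ii) n^β·μ_n((t,∞)) ≤ C'·t^{−β} for all n and all t ≥ λ/n. Then for every θ > 0 and every r > 0, (∫_{[0,∞)} e^{−θt} dμ_n(t))^{⌊n^β r⌋} → exp(−r·C·Γ(1−β)·θ^β) as n → ∞. -/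
/-!
Layer cake turns the Laplace transform into an integral of the tail,
`1 - ∫ e^{-θt} dμ_n = ∫_0^∞ μ_n((t,∞)) θ e^{-θt} dt` (`one_sub_laplace_eq`).
After multiplication by `n^β`, the integrand converges pointwise to `C t^{-β} θ e^{-θt}`. It is
dominated by `(C' + λ^β) t^{-β} θ e^{-θt}`: for `t ≥ λ/n` this is the assumed tail bound, and for
`t < λ/n` the trivial bound `μ_n((t,∞)) ≤ 1` suffices, since there `n^β ≤ λ^β t^{-β}`. Dominated
convergence and the Gamma integral give `n^β (1 - ∫ e^{-θt} dμ_n) → C Γ(1-β) θ^β`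
(`tendsto_scaled_one_sub_laplace`), and the elementary fact that
`N (1 - φ) → L` forces `φ^⌊N r⌋ → e^{-rL}` as `N → ∞` (`tendsto_pow_floor`) concludes.
-/

open Real MeasureTheory Filter

/-- The bounds `1 - 1/x ≤ log x ≤ x - 1` squeeze `⌊N r⌋ log φ` to `-rL`. -/
lemma tendsto_pow_floor {N φ : ℕ → ℝ} {L r : ℝ} (hr : 0 < r) (hN : Tendsto N atTop atTop)
    (h : Tendsto (fun n => N n * (1 - φ n)) atTop (nhds L)) :
    Tendsto (fun n => φ n ^ ⌊N n * r⌋₊) atTop (nhds (Real.exp (-(r * L)))) := by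
  have hφ : Tendsto φ atTop (nhds 1) := by
    have h1 : Tendsto (fun n => 1 - (N n)⁻¹ * (N n * (1 - φ n))) atTop (nhds (1 - 0 * L)) :=
      tendsto_const_nhds.sub ((tendsto_inv_atTop_zero.comp hN).mul h)
    rw [zero_mul, sub_zero] at h1
    refine h1.congr' ?_
    filter_upwards [hN.eventually_gt_atTop 0] with n hn
    field_simp
    ring
  have hk : Tendsto (fun n => (⌊N n * r⌋₊ : ℝ) * (1 - φ n)) atTop (nhds (r * L)) := by
    have h1 := ((tendsto_nat_floor_mul_div_atTop hr.le).comp hN).mul h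
    refine h1.congr' ?_
    filter_upwards [hN.eventually_gt_atTop 0] with n hn
    simp only [Function.comp, mul_comm r]
    field_simp
  have hpos : ∀ᶠ n in atTop, 0 < φ n := hφ.eventually (lt_mem_nhds one_pos)
  have hlog : Tendsto (fun n => (⌊N n * r⌋₊ : ℝ) * Real.log (φ n)) atTop (nhds (-(r * L))) := by
    have hlow : Tendsto (fun n => -((⌊N n * r⌋₊ : ℝ) * (1 - φ n) / φ n)) atTop
        (nhds (-(r * L))) := by
      simpa using (hk.div hφ one_ne_zero).neg
    refine tendsto_of_tendsto_of_tendsto_of_le_of_le' hlow hk.neg ?_ ?_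
    · filter_upwards [hpos] with n hn
      have h1 := mul_le_mul_of_nonneg_left (Real.one_sub_inv_le_log_of_pos hn)
        (Nat.cast_nonneg (α := ℝ) ⌊N n * r⌋₊)
      refine le_trans (le_of_eq ?_) h1
      field_simp
      ring
    · filter_upwards [hpos] with n hn
      have h1 := mul_le_mul_of_nonneg_left (Real.log_le_sub_one_of_pos hn)
        (Nat.cast_nonneg (α := ℝ) ⌊N n * r⌋₊)
      linarith
  refine ((Real.continuous_exp.tendsto _).comp hlog).congr' ?_
  filter_upwards [hpos] with n hn
  simp only [Function.comp]
  rw [Real.exp_nat_mul, Real.exp_log hn]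

lemma one_sub_laplace_eq (μ : Measure ℝ) [IsProbabilityMeasure μ] (hsupp : μ (Set.Iio 0) = 0)
    {θ : ℝ} (hθ : 0 < θ) :
    1 - ∫ t, Real.exp (-θ * t) ∂μ =
      ∫ t in Set.Ioi (0 : ℝ), (μ (Set.Ioi t)).toReal * (θ * Real.exp (-θ * t)) := by
  have hnn : ∀ᵐ x ∂μ, 0 ≤ x := by
    rw [ae_iff]
    simpa [Set.Iio] using hsupp
  have hprim : ∀ x : ℝ, ∫ t in (0 : ℝ)..x, θ * Real.exp (-θ * t) = 1 - Real.exp (-θ * x) := by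
    intro x
    have hd : ∀ t ∈ Set.uIcc (0 : ℝ) x,
        HasDerivAt (fun t => -Real.exp (-θ * t)) (θ * Real.exp (-θ * t)) t := by
      intro t _
      have h1 := (((hasDerivAt_id t).const_mul (-θ)).exp).neg
      convert! h1 using 1
      simp
      ring
    rw [intervalIntegral.integral_eq_sub_of_hasDerivAt hd
      (by apply Continuous.intervalIntegrable; fun_prop)]
    simp
    ring
  have hle : ∀ᵐ x ∂μ, Real.exp (-θ * x) ≤ 1 := by
    filter_upwards [hnn] with x hx
    exact Real.exp_le_one_iff.2 (by nlinarith)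
  have hint : Integrable (fun x => Real.exp (-θ * x)) μ := by
    refine Integrable.of_bound (by fun_prop) 1 ?_
    filter_upwards [hle] with x hx
    rwa [Real.norm_of_nonneg (Real.exp_pos _).le]
  have hmeas : Measurable fun t : ℝ => μ (Set.Ioi t) :=
    Antitone.measurable fun a b hab => measure_mono (Set.Ioi_subset_Ioi hab)
  have hcake := lintegral_comp_eq_lintegral_meas_lt_mul (f := fun x : ℝ => x)
    (g := fun t => θ * Real.exp (-θ * t)) μ hnn aemeasurable_id
    (fun t _ => by apply Continuous.intervalIntegrable; fun_prop)
    (ae_of_all _ fun t => by positivity)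
  simp only [hprim] at hcake
  have hL : 1 - ∫ t, Real.exp (-θ * t) ∂μ = ∫ t, (1 - Real.exp (-θ * t)) ∂μ := by
    rw [integral_sub (integrable_const _) hint]
    simp
  rw [hL, integral_eq_lintegral_of_nonneg_ae
    (by filter_upwards [hle] with x hx; simpa using hx) (by fun_prop), hcake,
    integral_eq_lintegral_of_nonneg_ae (ae_of_all _ fun t => by positivity)
      (by
        apply Measurable.aestronglyMeasurable
        exact hmeas.ennreal_toReal.mul (by fun_prop))]
  congr 1
  refine lintegral_congr fun t => ?_
  rw [ENNReal.ofReal_mul ENNReal.toReal_nonneg, ENNReal.ofReal_toReal (measure_ne_top _ _)]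
  rfl

/-- Extends the tail bound from `t ≥ λ/n` to all `t > 0`, at the cost of a larger constant. -/
lemma scaled_tail_le {β lam C' : ℝ} (hβ : 0 < β) (hlam : 0 < lam) (hC' : 0 < C')
    (μ : Measure ℝ) [IsProbabilityMeasure μ] {n : ℕ} (hn : 1 ≤ n)
    (hbd : ∀ t : ℝ, lam / n ≤ t → (n : ℝ) ^ β * (μ (Set.Ioi t)).toReal ≤ C' * t ^ (-β))
    {t : ℝ} (ht : 0 < t) :
    (n : ℝ) ^ β * (μ (Set.Ioi t)).toReal ≤ (C' + lam ^ β) * t ^ (-β) := by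
  have hn0 : (0 : ℝ) < n := by exact_mod_cast hn
  have hlp : 0 < lam ^ β := rpow_pos_of_pos hlam _
  have htp : 0 < t ^ (-β) := rpow_pos_of_pos ht _
  rcases le_or_gt (lam / n) t with h | h
  · nlinarith [hbd t h]
  · have h1 : (μ (Set.Ioi t)).toReal ≤ 1 :=
      ENNReal.toReal_le_of_le_ofReal zero_le_one (by simpa using prob_le_one)
    have h2 : (n : ℝ) ≤ lam / t := by
      rw [lt_div_iff₀ hn0] at h
      rw [le_div_iff₀ ht]
      linarith
    have h3 : (n : ℝ) ^ β ≤ lam ^ β * t ^ (-β) := by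
      calc (n : ℝ) ^ β ≤ (lam / t) ^ β := rpow_le_rpow hn0.le h2 hβ.le
        _ = lam ^ β * t ^ (-β) := by rw [div_rpow hlam.le ht.le, rpow_neg ht.le, div_eq_mul_inv]
    have h4 : (n : ℝ) ^ β * (μ (Set.Ioi t)).toReal ≤ (n : ℝ) ^ β :=
      mul_le_of_le_one_right (rpow_nonneg hn0.le _) h1
    nlinarith [mul_pos hC' htp]

lemma integral_stable_tail {β C θ : ℝ} (hβ : β < 1) (hθ : 0 < θ) :
    ∫ t in Set.Ioi (0 : ℝ), C * t ^ (-β) * (θ * Real.exp (-θ * t)) =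
      C * Real.Gamma (1 - β) * θ ^ β := by
  have h := Real.integral_rpow_mul_exp_neg_mul_Ioi (a := 1 - β) (r := θ) (by linarith) hθ
  calc ∫ t in Set.Ioi (0 : ℝ), C * t ^ (-β) * (θ * Real.exp (-θ * t))
      = ∫ t in Set.Ioi (0 : ℝ), (C * θ) * (t ^ (1 - β - 1) * Real.exp (-(θ * t))) := by
        congr 1
        ext t
        rw [show 1 - β - 1 = -β by ring, neg_mul]
        ring
    _ = C * Real.Gamma (1 - β) * θ ^ β := by
        rw [integral_const_mul, h, one_div, inv_rpow hθ.le, ← rpow_neg hθ.le]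
        have h1 : θ * θ ^ (-(1 - β)) = θ ^ β := by
          calc θ * θ ^ (-(1 - β)) = θ ^ (1 : ℝ) * θ ^ (-(1 - β)) := by rw [rpow_one]
            _ = θ ^ β := by rw [← rpow_add hθ]; congr 1; ring
        rw [← h1]
        ring

lemma tendsto_scaled_one_sub_laplace (β lam C C' : ℝ) (hβ : β ∈ Set.Ioo (0 : ℝ) 1)
    (hlam : 0 < lam) (hC' : 0 < C')
    (μ : ℕ → Measure ℝ) (hprob : ∀ n, IsProbabilityMeasure (μ n))
    (hsupp : ∀ n, μ n (Set.Iio 0) = 0)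
    (hlim : ∀ t : ℝ, 0 < t →
      Tendsto (fun n : ℕ => (n : ℝ) ^ β * (μ n (Set.Ioi t)).toReal) atTop
        (nhds (C * t ^ (-β))))
    (hbd : ∀ n : ℕ, 1 ≤ n → ∀ t : ℝ, lam / n ≤ t →
      (n : ℝ) ^ β * (μ n (Set.Ioi t)).toReal ≤ C' * t ^ (-β))
    {θ : ℝ} (hθ : 0 < θ) :
    Tendsto (fun n : ℕ => (n : ℝ) ^ β * (1 - ∫ t, Real.exp (-θ * t) ∂(μ n))) atTop
      (nhds (C * Real.Gamma (1 - β) * θ ^ β)) := by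
  have heq : ∀ n : ℕ, (n : ℝ) ^ β * (1 - ∫ t, Real.exp (-θ * t) ∂(μ n)) =
      ∫ t in Set.Ioi (0 : ℝ),
        (n : ℝ) ^ β * (μ n (Set.Ioi t)).toReal * (θ * Real.exp (-θ * t)) := by
    intro n
    rw [one_sub_laplace_eq (μ n) (hsupp n) hθ, ← integral_const_mul]
    simp only [mul_assoc]
  simp only [heq]
  rw [← integral_stable_tail hβ.2 hθ]
  refine tendsto_integral_filter_of_dominated_convergence
    (fun t => (C' + lam ^ β) * t ^ (-β) * (θ * Real.exp (-θ * t))) ?_ ?_ ?_ ?_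
  · refine Eventually.of_forall fun n => Measurable.aestronglyMeasurable ?_
    have hmeas : Measurable fun t : ℝ => μ n (Set.Ioi t) :=
      Antitone.measurable fun a b hab => measure_mono (Set.Ioi_subset_Ioi hab)
    exact (hmeas.ennreal_toReal.const_mul _).mul (by fun_prop)
  · filter_upwards [eventually_ge_atTop 1] with n hn
    filter_upwards [ae_restrict_mem measurableSet_Ioi] with t ht
    rw [Real.norm_of_nonneg (by positivity)]
    exact mul_le_mul_of_nonneg_right
      (scaled_tail_le hβ.1 hlam hC' (μ n) hn (hbd n hn) ht) (by positivity)
  · have h := (integrableOn_rpow_mul_exp_neg_mul_rpow (p := 1) (s := -β) (b := θ)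
      (by linarith [hβ.2]) one_pos hθ).const_mul ((C' + lam ^ β) * θ)
    refine h.congr (ae_of_all _ fun t => ?_)
    simp only [rpow_one]
    ring
  · filter_upwards [ae_restrict_mem measurableSet_Ioi] with t ht
    exact (hlim t ht).mul_const _

/-- Convergence of the rescaled return-time random walks to a stable subordinator: if `μ_n`
are probability measures on `[0,∞)` whose tails satisfy `n^β μ_n((t,∞)) → C t^{−β}` with the
uniform bound `n^β μ_n((t,∞)) ≤ C' t^{−β}` for `t ≥ λ/n`, then for every `θ > 0` and `r > 0`,
`(∫ e^{−θt} dμ_n(t))^{⌊n^β r⌋} → exp(−r C Γ(1−β) θ^β)`. -/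
theorem subordinator_limit (β lam C C' : ℝ) (hβ : β ∈ Set.Ioo (0 : ℝ) 1)
    (hlam : 0 < lam) (hC : 0 < C) (hC' : 0 < C')
    (μ : ℕ → Measure ℝ) (hprob : ∀ n, IsProbabilityMeasure (μ n))
    (hsupp : ∀ n, μ n (Set.Iio 0) = 0)
    (hlim : ∀ t : ℝ, 0 < t →
      Tendsto (fun n : ℕ => (n : ℝ) ^ β * (μ n (Set.Ioi t)).toReal) atTop
        (nhds (C * t ^ (-β))))
    (hbd : ∀ n : ℕ, 1 ≤ n → ∀ t : ℝ, lam / n ≤ t →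
      (n : ℝ) ^ β * (μ n (Set.Ioi t)).toReal ≤ C' * t ^ (-β)) :
    ∀ θ : ℝ, 0 < θ → ∀ r : ℝ, 0 < r →
      Tendsto (fun n : ℕ => (∫ t, Real.exp (-θ * t) ∂(μ n)) ^ ⌊(n : ℝ) ^ β * r⌋₊) atTop
        (nhds (Real.exp (-(r * C * Real.Gamma (1 - β) * θ ^ β)))) := by
  intro θ hθ r hr
  have hN : Tendsto (fun n : ℕ => (n : ℝ) ^ β) atTop atTop :=
    (tendsto_rpow_atTop hβ.1).comp tendsto_natCast_atTop_atTop
  have h := tendsto_pow_floor hr hN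
    (tendsto_scaled_one_sub_laplace β lam C C' hβ hlam hC' μ hprob hsupp hlim hbd hθ)
  simpa only [mul_assoc] using h
end
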